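/- arXiv:0909.4767 — 5 statements merged into one kernel-verified Lean document; each statement's English description precedes it below -/
import Mathlib

section
/- Let G be a finite group acting on a finite set X, and suppose X is G-symmetric: for every (x, y) ∈ X², there exists g ∈ G with g·x = y and g·y = x. Then for any two G-invariant functions K, K' : X × X → ℂ (meaning K(g·x, g·y) = K(x, y) for all g ∈ G and (x,y) ∈ X², and likewise for K'), the convolutions agree: K * K' = K' * K, where (K * K')(x, y) = Σ_{z ∈ X} K(x, z)·K'(z, y). That is, the algebra of G-invariant kernels on X under convolution is commutative. -/
/-!
If `g` swaps `x` and `y`, then invariance and the symmetry of zonal kernels give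
`K x z = K (g • z) y` and `K' z y = K' x (g • z)`. So the substitution `z ↦ g • z` turns the sum
defining `(K * K') x y` into the one defining `(K' * K) x y`.
-/

/-- A `G`-symmetric action: any two points of `X` are swapped by some element of `G`. This is the
condition under which zonal kernels commute. -/
def IsSymmetricAction (G X : Type*) [SMul G X] : Prop :=
  ∀ x y : X, ∃ g : G, g • x = y ∧ g • y = x

/-- A zonal, or `G`-invariant, kernel on `X`: a function of two points that is constant on the
orbits of the diagonal action. The values may lie in any type. -/
def IsZonalKernel (G : Type*) {X R : Type*} [SMul G X] (K : X → X → R) : Prop :=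
  ∀ (g : G) (x y : X), K (g • x) (g • y) = K x y

namespace IsZonalKernel

variable {G X R : Type*} {K K' : X → X → R}

theorem apply_comm [SMul G X] (hK : IsZonalKernel G K) (hsym : IsSymmetricAction G X) (x y : X) :
    K x y = K y x := by
  obtain ⟨g, hgx, hgy⟩ := hsym x y
  calc
    K x y = K (g • x) (g • y) := (hK g x y).symm
    _ = K y x := by rw [hgx, hgy]

theorem mul_eq_mul_of_swap [SMul G X] [CommMagma R] (hK : IsZonalKernel G K)
    (hK' : IsZonalKernel G K') (hsym : IsSymmetricAction G X) {g : G} {x y : X}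
    (hgx : g • x = y) (hgy : g • y = x) (z : X) :
    K x z * K' z y = K' x (g • z) * K (g • z) y := by
  have hKz : K x z = K (g • z) y := by
    rw [← hK g x z, hgx, hK.apply_comm hsym]
  have hKz' : K' z y = K' x (g • z) := by
    rw [← hK' g z y, hgy, hK'.apply_comm hsym]
  rw [hKz, hKz', mul_comm]

end IsZonalKernel

theorem invariant_kernels_commute_general {G X R : Type*} [Group G] [MulAction G X]
    [AddCommMonoid R] [CommMagma R] [TopologicalSpace R] {K K' : X → X → R}
    (hsym : IsSymmetricAction G X) (hK : IsZonalKernel G K) (hK' : IsZonalKernel G K')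
    (x y : X) (s : R) :
    HasSum (fun z ↦ K x z * K' z y) s ↔ HasSum (fun z ↦ K' x z * K z y) s := by
  obtain ⟨g, hgx, hgy⟩ := hsym x y
  simp only [hK.mul_eq_mul_of_swap hK' hsym hgx hgy]
  exact (MulAction.toPerm g).hasSum_iff (f := fun z ↦ K' x z * K z y)

/-- For a finite group `G` acting on a finite set `X` which is `G`-symmetric
(every pair `(x, y)` can be swapped by some `g ∈ G`), the algebra of `G`-invariant kernels
on `X` under convolution is commutative. -/
theorem invariant_kernels_commute {G X : Type*} [Group G] [Fintype G] [MulAction G X]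
    [Fintype X]
    (hsym : ∀ x y : X, ∃ g : G, g • x = y ∧ g • y = x)
    (K K' : X → X → ℂ)
    (hK : ∀ (g : G) (x y : X), K (g • x) (g • y) = K x y)
    (hK' : ∀ (g : G) (x y : X), K' (g • x) (g • y) = K' x y) :
    ∀ x y : X, (∑ z : X, K x z * K' z y) = ∑ z : X, K' x z * K z y := by
  intro x y
  exact ((invariant_kernels_commute_general hsym hK hK' x y _).mp (hasSum_fintype _)).unique
    (hasSum_fintype _)
end

section
/- Let n ≥ 1 and for 0 ≤ k ≤ n define the Krawtchouk polynomial value K_k(w) = Σ_{i=0}^{w} (−1)^i · C(w, i) · C(n−w, k−i) for integer 0 ≤ w ≤ n (binomial coefficients, with C(a,b) = 0 when b < 0 or b > a). Then for every subset C ⊆ F_2^n (binary code) and every 0 ≤ k ≤ n: Σ_{(c, c') ∈ C²} K_k(d_H(c, c')) ≥ 0, where d_H(x, y) is the Hamming distance, the number of coordinates where x and y differ. -/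
/-- The value `K_k(w)` of the binary Krawtchouk polynomial of degree `k` and parameter `n`:
`K_k(w) = ∑_{i=0}^{w} (-1)^i C(w, i) C(n-w, k-i)`, where the binomial coefficient
`C(a, b)` is zero when `b < 0` (encoded via the `if i ≤ k` guard) or `b > a`. -/
def kraw (n k w : ℕ) : ℤ :=
  ∑ i ∈ Finset.range (w + 1),
    if i ≤ k then (-1 : ℤ) ^ i * (w.choose i) * ((n - w).choose (k - i)) else 0

/-!
The generating function of `k ↦ K_k(w)` is `(1 - X) ^ w * (1 + X) ^ (n - w)`. If `w` is the weight
of `x`, this is the product over the coordinates of `1 + (-1) ^ xᵢ X`, so `K_k(w)` is the sum at `x`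
of the Walsh characters `χ_S` with `|S| = k`. Since `χ_S (x - y) = χ_S x * χ_S y`, the double sum
over the code becomes `∑ S, (∑ c, χ_S c) ^ 2`.
-/

section GeneratingFunction

open Polynomial

lemma coeff_one_sub_X_pow {R : Type*} [CommRing R] (n k : ℕ) :
    ((1 - X : R[X]) ^ n).coeff k = (-1) ^ k * (n.choose k : R) := by
  have h : (1 - X : R[X]) ^ n = ((1 + X) ^ n).comp (C (-1) * X) := by
    simp [sub_eq_add_neg]
  rw [h, comp_C_mul_X_coeff, coeff_one_add_X_pow, mul_comm]

lemma coeff_prod_one_add_C_mul_X {ι R : Type*} [CommSemiring R] (s : Finset ι) (f : ι → R)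
    (k : ℕ) :
    (∏ i ∈ s, (1 + C (f i) * X)).coeff k = ∑ S ∈ s.powersetCard k, ∏ i ∈ S, f i := by
  have coeff_term (S : Finset ι) :
      (∏ i ∈ S, (C (f i) * X)).coeff k = if S.card = k then ∏ i ∈ S, f i else 0 := by
    rw [Finset.prod_mul_distrib, Finset.prod_const, ← map_prod, coeff_C_mul_X_pow]
    simp only [eq_comm]
  simp only [Finset.prod_one_add, finsetSum_coeff, coeff_term, Finset.powersetCard_eq_filter,
    Finset.sum_filter]

lemma kraw_eq_coeff (n k w : ℕ) :
    kraw n k w = ((1 - X : ℤ[X]) ^ w * (1 + X) ^ (n - w)).coeff k := by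
  rw [kraw, coeff_mul, Finset.Nat.sum_antidiagonal_eq_sum_range_succ_mk, ← Finset.sum_filter]
  simp only [coeff_one_sub_X_pow, coeff_one_add_X_pow]
  refine Finset.sum_subset (fun i hi ↦ ?_) fun i hik hi ↦ ?_
  · simp only [Finset.mem_filter, Finset.mem_range] at hi ⊢
    omega
  · have hwi : w < i := by
      simp only [Finset.mem_filter, Finset.mem_range] at hi hik
      omega
    simp [Nat.choose_eq_zero_of_lt hwi]

end GeneratingFunction

/-- The Walsh character `x ↦ (-1) ^ ∑ i ∈ S, x i` of the additive group `F_2^ι`, built as the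
product over `S` of the sign characters of the coordinates. -/
def walshChar {ι : Type*} (S : Finset ι) : AddChar (ι → ZMod 2) ℤ :=
  ∏ i ∈ S, (AddChar.zmodChar 2 neg_one_sq).compAddMonoidHom (Pi.evalAddMonoidHom _ i)

lemma walshChar_apply {ι : Type*} (S : Finset ι) (x : ι → ZMod 2) :
    walshChar S x = ∏ i ∈ S, (-1) ^ (x i).val := by
  simp [walshChar, AddChar.prod_apply, AddChar.zmodChar_apply]

lemma walshChar_sub {ι : Type*} (S : Finset ι) (x y : ι → ZMod 2) :
    walshChar S (x - y) = walshChar S x * walshChar S y := by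
  rw [← AddChar.map_add_eq_mul]
  congr 1
  exact funext fun i ↦ CharTwo.sub_eq_add (x i) (y i)

section Hamming

variable {ι : Type*} [Fintype ι]

open Polynomial in
lemma prod_one_add_neg_one_pow_mul_X (x : ι → ZMod 2) :
    ∏ i, (1 + C ((-1 : ℤ) ^ (x i).val) * X) =
      (1 - X) ^ hammingNorm x * (1 + X) ^ (Fintype.card ι - hammingNorm x) := by
  have sign_eq (a : ZMod 2) : (-1 : ℤ) ^ a.val = if a ≠ 0 then -1 else 1 := by
    decide +revert
  have factor (a : ZMod 2) :
      (1 + C ((-1 : ℤ) ^ a.val) * X : ℤ[X]) = if a ≠ 0 then 1 - X else 1 + X := by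
    rw [sign_eq]
    split_ifs <;> simp [sub_eq_add_neg]
  have card_zeros : ({i | ¬ x i ≠ 0} : Finset ι).card = Fintype.card ι - hammingNorm x :=
    Nat.eq_sub_of_add_eq' (Finset.card_filter_add_card_filter_not _)
  simp only [factor, Finset.prod_ite, Finset.prod_const, card_zeros, hammingNorm]

lemma kraw_hammingNorm (k : ℕ) (x : ι → ZMod 2) :
    kraw (Fintype.card ι) k (hammingNorm x) =
      ∑ S ∈ Finset.univ.powersetCard k, walshChar S x := by
  simp only [kraw_eq_coeff, ← prod_one_add_neg_one_pow_mul_X, coeff_prod_one_add_C_mul_X,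
    walshChar_apply]

lemma kraw_hammingDist (k : ℕ) (x y : ι → ZMod 2) :
    kraw (Fintype.card ι) k (hammingDist x y) =
      ∑ S ∈ Finset.univ.powersetCard k, walshChar S x * walshChar S y := by
  rw [hammingDist_comm, hammingDist_eq_hammingNorm, neg_add_eq_sub, kraw_hammingNorm]
  simp only [walshChar_sub]

lemma sum_mul_kraw_hammingDist {R : Type*} [CommRing R] (k : ℕ) (C : Finset (ι → ZMod 2))
    (f : (ι → ZMod 2) → R) :
    ∑ c ∈ C, ∑ c' ∈ C, f c * f c' * kraw (Fintype.card ι) k (hammingDist c c') =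
      ∑ S ∈ Finset.univ.powersetCard k, (∑ c ∈ C, f c * walshChar S c) ^ 2 := by
  calc
    _ = ∑ c ∈ C, ∑ c' ∈ C, ∑ S ∈ Finset.univ.powersetCard k,
          (f c * walshChar S c) * (f c' * walshChar S c') := by
      simp only [kraw_hammingDist, Int.cast_sum, Int.cast_mul, Finset.mul_sum, mul_mul_mul_comm]
    _ = ∑ S ∈ Finset.univ.powersetCard k, ∑ c ∈ C, ∑ c' ∈ C,
          (f c * walshChar S c) * (f c' * walshChar S c') := by
      rw [Finset.sum_comm_cycle]
    _ = _ := by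
      simp only [sq, Finset.sum_mul_sum]

theorem krawtchouk_sum_nonneg_general {R : Type*} [CommRing R] [LinearOrder R]
    [IsStrictOrderedRing R] (k : ℕ) (C : Finset (ι → ZMod 2)) (f : (ι → ZMod 2) → R) :
    0 ≤ ∑ c ∈ C, ∑ c' ∈ C, f c * f c' * kraw (Fintype.card ι) k (hammingDist c c') := by
  rw [sum_mul_kraw_hammingDist]
  exact Finset.sum_nonneg fun S _ ↦ sq_nonneg _

end Hamming

/-- for every binary code `C ⊆ F_2^n` and every `0 ≤ k ≤ n`,
`∑_{(c,c') ∈ C²} K_k(d_H(c,c')) ≥ 0`. -/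
theorem krawtchouk_sum_nonneg (n k : ℕ) (hn : 1 ≤ n) (hk : k ≤ n)
    (C : Finset (Fin n → ZMod 2)) :
    0 ≤ ∑ c ∈ C, ∑ c' ∈ C, kraw n k (hammingDist c c') := by
  simpa using krawtchouk_sum_nonneg_general k C fun _ ↦ (1 : ℤ)
end

section
/- Let C be a linear code, i.e. an F_2-linear subspace of F_2^n, and let C^⊥ = {y ∈ F_2^n : x·y = 0 for all x ∈ C} be its dual code (with x·y = Σ_i x_i y_i in F_2). Let A_w(C) denote the number of codewords of C of Hamming weight w, and let K_k(w) = Σ_{i=0}^{w} (−1)^i C(w, i) C(n−w, k−i) be the binary Krawtchouk polynomial values. Then the MacWilliams identity holds: for every 0 ≤ k ≤ n, A_k(C^⊥) = (1/|C|) · Σ_{w=0}^{n} A_w(C) · K_k(w). -/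
/-- `A_w(S)`: the number of words of Hamming weight `w` in a set `S ⊆ F_2^n`. -/
noncomputable def wtCount (n : ℕ) (S : Set (Fin n → ZMod 2)) (w : ℕ) : ℕ :=
  Nat.card {x : Fin n → ZMod 2 // x ∈ S ∧ hammingNorm x = w}

/-- The dual code `C^⊥ = {y : x·y = 0 for all x ∈ C}` of a linear binary code `C`. -/
def dualCode (n : ℕ) (C : Submodule (ZMod 2) (Fin n → ZMod 2)) : Set (Fin n → ZMod 2) :=
  {y | ∀ x ∈ C, ∑ i, x i * y i = 0}

/-!
Fix a primitive additive character `ψ` of the finite alphabet `R`. Summing `ψ (x ⬝ᵥ y)` over the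
words `x` of a code `C` gives `|C|` times the indicator of the dual code at `y`. Summing
`ψ (x ⬝ᵥ y) s ^ (n - wt y) t ^ wt y` over all words `y` factors over the coordinates and gives
`(s + (q - 1) t) ^ (n - wt x) (s - t) ^ wt x`. Exchanging the order of summation relates the weight
enumerators of `C` and its dual, and the Krawtchouk values are the coefficients of this relation
at `s = 1`, `t = X`.
-/

open Finset Polynomial

section WeightDistribution

variable {ι R : Type*} [Fintype ι] [Zero R] [DecidableEq R]

/-- The weight distribution of a set of words over an arbitrary alphabet: the number of its elements
of Hamming weight `w`. It generalizes `wtCount`. -/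
noncomputable def weightDistribution (S : Set (ι → R)) (w : ℕ) : ℕ :=
  Nat.card {x : ι → R // x ∈ S ∧ hammingNorm x = w}

/-- The homogeneous weight enumerator of a finite set of words, evaluated at `s` (marking the zero
coordinates) and `t` (marking the nonzero ones). Polynomial arguments recover it as a polynomial. -/
def weightEnumerator {A : Type*} [CommSemiring A] (S : Set (ι → R)) [Fintype S] (s t : A) : A :=
  ∑ x : S, s ^ (Fintype.card ι - hammingNorm x.1) * t ^ hammingNorm x.1

lemma wtCount_eq_weightDistribution {n : ℕ} (S : Set (Fin n → ZMod 2)) (w : ℕ) :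
    wtCount n S w = weightDistribution S w :=
  rfl

lemma weightDistribution_eq_card_filter (S : Set (ι → R)) [Fintype S] (w : ℕ) :
    weightDistribution S w = #{x : S | hammingNorm x.1 = w} := by
  rw [← Fintype.card_subtype, ← Nat.card_eq_fintype_card]
  exact (Nat.card_congr (Equiv.subtypeSubtypeEquivSubtypeInter (· ∈ S) _)).symm

lemma sum_comp_hammingNorm {A : Type*} [Semiring A] (S : Set (ι → R)) [Fintype S] (f : ℕ → A) :
    ∑ x : S, f (hammingNorm x.1) =
      ∑ w ∈ range (Fintype.card ι + 1), (weightDistribution S w : A) * f w := by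
  have weight_mem (x : S) (_ : x ∈ univ) : hammingNorm x.1 ∈ range (Fintype.card ι + 1) :=
    mem_range_succ_iff.mpr hammingNorm_le_card_fintype
  simp only [← sum_fiberwise_of_maps_to' weight_mem, sum_const, nsmul_eq_mul,
    weightDistribution_eq_card_filter]

lemma coeff_weightEnumerator_one_X {A : Type*} [CommSemiring A] (S : Set (ι → R)) [Fintype S]
    (k : ℕ) : (weightEnumerator S (1 : A[X]) X).coeff k = weightDistribution S k := by
  simp only [weightEnumerator, one_pow, one_mul, finsetSum_coeff, coeff_X_pow, sum_boole,
    weightDistribution_eq_card_filter, eq_comm]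

lemma prod_ite_coord_eq_zero {A : Type*} [CommMonoid A] (x : ι → R) (s t : A) :
    ∏ i, (if x i = 0 then s else t) =
      s ^ (Fintype.card ι - hammingNorm x) * t ^ hammingNorm x := by
  have card_zeros : #{i | x i = 0} = Fintype.card ι - hammingNorm x := by
    rw [eq_tsub_iff_add_eq_of_le hammingNorm_le_card_fintype]
    exact card_filter_add_card_filter_not _
  rw [prod_ite, prod_const, prod_const, card_zeros]
  rfl

end WeightDistribution

section Krawtchouk

/-- The value at `w` of the `q`-ary Krawtchouk polynomial of degree `k` for words of length `n`.
It is meant for `w ≤ n`, since `n - w` is a truncated subtraction. -/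
def krawtchouk (q n k w : ℕ) : ℤ :=
  ∑ p ∈ antidiagonal k, (-1) ^ p.1 * (q - 1 : ℤ) ^ p.2 * w.choose p.1 * (n - w).choose p.2

lemma coeff_one_add_C_mul_X_pow {A : Type*} [CommSemiring A] (a : A) (m k : ℕ) :
    ((1 + C a * X) ^ m).coeff k = a ^ k * m.choose k := by
  have h : (1 + C a * X) ^ m = ((1 + X) ^ m).comp (C a * X) := by simp
  rw [h, comp_C_mul_X_coeff, coeff_one_add_X_pow, mul_comm]

lemma coeff_eq_krawtchouk {A : Type*} [CommRing A] (q n k w : ℕ) :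
    ((1 + ((q : A[X]) - 1) * X) ^ (n - w) * (1 - X) ^ w).coeff k =
      (krawtchouk q n k w : A) := by
  have one_sub_X_eq : (1 - X : A[X]) = 1 + C (-1) * X := by simp [sub_eq_add_neg]
  have one_add_X_eq : (1 + ((q : A[X]) - 1) * X) = 1 + C (q - 1 : A) * X := by simp
  rw [mul_comm, coeff_mul, one_sub_X_eq, one_add_X_eq, krawtchouk]
  push_cast
  exact sum_congr rfl fun p _ ↦ by simp only [coeff_one_add_C_mul_X_pow]; ring

lemma kraw_eq_krawtchouk (n k w : ℕ) : kraw n k w = krawtchouk 2 n k w := by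
  let term (i : ℕ) : ℤ := (-1) ^ i * w.choose i * (n - w).choose (k - i)
  have kraw_eq : kraw n k w = ∑ i ∈ range (w + 1) with i ≤ k, term i := (sum_filter _ _).symm
  have krawtchouk_eq : krawtchouk 2 n k w = ∑ i ∈ range (k + 1), term i := by
    rw [krawtchouk, Nat.sum_antidiagonal_eq_sum_range_succ_mk]
    simp [term]
  rw [kraw_eq, krawtchouk_eq]
  refine sum_subset (fun i hi ↦ ?_) (fun i hik hiw ↦ ?_)
  · exact mem_range_succ_iff.mpr (mem_filter.mp hi).2
  · have hwi : w < i := by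
      simp only [mem_filter, mem_range] at hik hiw
      omega
    simp [term, Nat.choose_eq_zero_of_lt hwi]

end Krawtchouk

section Duality

lemma addChar_map_sum {ι G M : Type*} [AddCommMonoid G] [CommMonoid M] (ψ : AddChar G M)
    (s : Finset ι) (f : ι → G) : ψ (∑ i ∈ s, f i) = ∏ i ∈ s, ψ (f i) :=
  map_prod ψ.toMonoidHom (fun i ↦ Multiplicative.ofAdd (f i)) s

variable {ι R A : Type*} [Fintype ι] [CommRing R] [CommRing A]

/-- The dual of a code over `R` for the dot product. It generalizes `dualCode` and is bundled as a
submodule, so that it is again a code. -/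
def euclideanDual (C : Submodule R (ι → R)) : Submodule R (ι → R) where
  carrier := {y | ∀ x ∈ C, x ⬝ᵥ y = 0}
  add_mem' hy hz x hx := by rw [dotProduct_add, hy x hx, hz x hx, add_zero]
  zero_mem' x _ := dotProduct_zero x
  smul_mem' a y hy x hx := by rw [dotProduct_smul, hy x hx, smul_zero]

lemma coe_euclideanDual_eq_dualCode {n : ℕ} (C : Submodule (ZMod 2) (Fin n → ZMod 2)) :
    (euclideanDual C : Set (Fin n → ZMod 2)) = dualCode n C :=
  rfl

variable [IsDomain A] {ψ : AddChar R A}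

lemma sum_primitive_linearMap (hψ : ψ.IsPrimitive) {M : Type*} [AddCommGroup M] [Module R M]
    [Fintype M] (f : M →ₗ[R] R) [Decidable (f = 0)] :
    ∑ m, ψ (f m) = if f = 0 then (Fintype.card M : A) else 0 := by
  split_ifs with hf
  · simp [hf]
  · obtain ⟨m, hm⟩ : ∃ m, f m ≠ 0 := not_forall.mp fun h ↦ hf (LinearMap.ext h)
    obtain ⟨r, hr⟩ : ∃ r, ψ.mulShift (f m) r ≠ 1 := AddChar.ne_one_iff.mp (hψ hm)
    have comp_ne_one : ψ.compAddMonoidHom f.toAddMonoidHom ≠ 1 :=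
      AddChar.ne_one_iff.mpr ⟨r • m, by simpa [AddChar.mulShift_apply, mul_comm] using hr⟩
    exact AddChar.sum_eq_zero_of_ne_one comp_ne_one

lemma sum_primitive_dotProduct (hψ : ψ.IsPrimitive) (C : Submodule R (ι → R)) [Fintype C]
    (y : ι → R) [Decidable (y ∈ euclideanDual C)] :
    ∑ x : C, ψ (x.1 ⬝ᵥ y) = if y ∈ euclideanDual C then (Fintype.card C : A) else 0 := by
  classical
  let pairing : C →ₗ[R] R := (Fintype.linearCombination R y).domRestrict C
  have pairing_eq_zero : pairing = 0 ↔ y ∈ euclideanDual C :=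
    LinearMap.ext_iff.trans Subtype.forall
  exact (sum_primitive_linearMap hψ pairing).trans (if_congr pairing_eq_zero rfl rfl)

variable [Fintype R] [DecidableEq R]

lemma sum_primitive_mul_ite (hψ : ψ.IsPrimitive) (b : R) (s t : A) :
    ∑ a, ψ (b * a) * (if a = 0 then s else t) =
      if b = 0 then s + (Fintype.card R - 1) * t else s - t := by
  have split_weight (a : R) : (if a = 0 then s else t) = t + if a = 0 then s - t else 0 := by
    split_ifs <;> ring
  have sum_char : ∑ a, ψ (b * a) = if b = 0 then (Fintype.card R : A) else 0 := by
    simpa only [mul_comm b, Nat.cast_ite, Nat.cast_zero] using AddChar.sum_mulShift b hψ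
  calc ∑ a, ψ (b * a) * (if a = 0 then s else t)
      = (∑ a, ψ (b * a)) * t + (s - t) := by
        simp [split_weight, mul_add, sum_add_distrib, sum_mul]
    _ = if b = 0 then s + (Fintype.card R - 1) * t else s - t := by
        rw [sum_char]
        split_ifs <;> ring

lemma sum_primitive_dotProduct_mul_weight [DecidableEq ι] (hψ : ψ.IsPrimitive) (x : ι → R)
    (s t : A) :
    ∑ y : ι → R, ψ (x ⬝ᵥ y) * (s ^ (Fintype.card ι - hammingNorm y) * t ^ hammingNorm y) =
      (s + (Fintype.card R - 1) * t) ^ (Fintype.card ι - hammingNorm x) *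
        (s - t) ^ hammingNorm x :=
  calc ∑ y : ι → R, ψ (x ⬝ᵥ y) * (s ^ (Fintype.card ι - hammingNorm y) * t ^ hammingNorm y)
      = ∑ y : ι → R, ∏ i, ψ (x i * y i) * (if y i = 0 then s else t) := by
        simp only [dotProduct, addChar_map_sum, prod_mul_distrib, prod_ite_coord_eq_zero]
    _ = ∏ i, ∑ a, ψ (x i * a) * (if a = 0 then s else t) :=
        (Fintype.prod_sum fun i a ↦ ψ (x i * a) * (if a = 0 then s else t)).symm
    _ = _ := by simp only [sum_primitive_mul_ite hψ, prod_ite_coord_eq_zero]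

theorem weightEnumerator_euclideanDual (hψ : ψ.IsPrimitive) (C : Submodule R (ι → R)) [Fintype C]
    [Fintype (euclideanDual C)] (s t : A) :
    Fintype.card C * weightEnumerator (euclideanDual C : Set (ι → R)) s t =
      weightEnumerator (C : Set (ι → R)) (s + (Fintype.card R - 1) * t) (s - t) := by
  classical
  let weight (y : ι → R) : A := s ^ (Fintype.card ι - hammingNorm y) * t ^ hammingNorm y
  calc (Fintype.card C : A) * ∑ y : euclideanDual C, weight y
      = ∑ y : ι → R, (if y ∈ euclideanDual C then (Fintype.card C : A) else 0) * weight y := by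
        simp only [ite_mul, zero_mul, ← sum_filter, mul_sum]
        exact (sum_subtype _ (by simp) fun y ↦ (Fintype.card C : A) * weight y).symm
    _ = ∑ x : C, ∑ y : ι → R, ψ (x.1 ⬝ᵥ y) * weight y := by
        simp only [← sum_primitive_dotProduct hψ, sum_mul]
        exact sum_comm
    _ = _ := sum_congr rfl fun x _ ↦ sum_primitive_dotProduct_mul_weight hψ x.1 s t

theorem macwilliams_identity_general (hψ : ψ.IsPrimitive) (C : Submodule R (ι → R)) (k : ℕ) :
    (Nat.card C : A) * weightDistribution (euclideanDual C : Set (ι → R)) k =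
      ∑ w ∈ range (Fintype.card ι + 1), (weightDistribution (C : Set (ι → R)) w : A) *
        krawtchouk (Fintype.card R) (Fintype.card ι) k w := by
  classical
  have hψX : ((Polynomial.C : A →+* A[X]).toMonoidHom.compAddChar ψ).IsPrimitive :=
    hψ.compMulHom_of_isPrimitive Polynomial.C_injective
  have enumerators := congrArg (coeff · k) (weightEnumerator_euclideanDual hψX C 1 X)
  rw [coeff_natCast_mul, coeff_weightEnumerator_one_X] at enumerators
  rw [Nat.card_eq_fintype_card, enumerators, ← sum_comp_hammingNorm, weightEnumerator,
    finsetSum_coeff]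
  exact sum_congr rfl fun x _ ↦ coeff_eq_krawtchouk _ _ _ _

end Duality

lemma isPrimitive_zmodChar_neg_one {A : Type*} [CommRing A] [Nontrivial A] (p : ℕ) [CharP A p]
    (hp : p ≠ 2) : (AddChar.zmodChar 2 (neg_one_sq : (-1 : A) ^ 2 = 1)).IsPrimitive :=
  AddChar.zmodChar_primitive_of_primitive_root 2 (IsPrimitiveRoot.neg_one p hp)

/-- the MacWilliams identity: for a linear binary code `C ⊆ F_2^n` and every
`0 ≤ k ≤ n`, `A_k(C^⊥) = (1/|C|) ∑_{w=0}^{n} A_w(C) K_k(w)`. -/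
theorem macwilliams_identity (n : ℕ) (hn : 1 ≤ n)
    (C : Submodule (ZMod 2) (Fin n → ZMod 2)) (k : ℕ) (hk : k ≤ n) :
    (wtCount n (dualCode n C) k : ℝ) =
      (1 / (Nat.card C : ℝ)) *
        ∑ w ∈ Finset.range (n + 1), (wtCount n (C : Set (Fin n → ZMod 2)) w : ℝ) *
          (kraw n k w : ℝ) := by
  rw [one_div, eq_inv_mul_iff_mul_eq₀ (Nat.cast_ne_zero.mpr Nat.card_pos.ne')]
  simpa [kraw_eq_krawtchouk, wtCount_eq_weightDistribution, coe_euclideanDual_eq_dualCode] using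
    macwilliams_identity_general (isPrimitive_zmodChar_neg_one (A := ℝ) 0 two_ne_zero.symm) C k
end

section
/- Let Γ = (V, E) be a finite simple graph and let c : V → {1, …, k} be a proper coloring of the complement graph of Γ (i.e., c(i) ≠ c(j) whenever i ≠ j and (i, j) ∉ E). Then for every real symmetric positive semidefinite matrix B indexed by V × V satisfying Σ_{i∈V} B_{i,i} = 1 and B_{i,j} = 0 for all (i, j) ∈ E, one has Σ_{(i,j)∈V²} B_{i,j} ≤ k. (In particular, the Lovász theta number ϑ(Γ), defined as the maximum of Σ_{i,j} B_{i,j} over such B, satisfies ϑ(Γ) ≤ χ(complement of Γ).) -/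
/-!
Write `B` as the Gram matrix of vectors `v i`, so that the sum of its entries is `‖∑ i, v i‖ ^ 2`
and its trace is `∑ i, ‖v i‖ ^ 2`. Split `∑ i, v i` into one partial sum per colour:
Cauchy–Schwarz costs a factor equal to the number of colours. Distinct vertices of the same colour
are adjacent in `Γ`, so their vectors are orthogonal, and Pythagoras evaluates each partial sum.
-/

open Finset

open scoped ComplexOrder InnerProductSpace

theorem norm_sum_sq_le_card_mul_sum_norm_sq {ι E : Type*} [SeminormedAddCommGroup E]
    (s : Finset ι) (v : ι → E) : ‖∑ i ∈ s, v i‖ ^ 2 ≤ #s * ∑ i ∈ s, ‖v i‖ ^ 2 :=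
  calc
    ‖∑ i ∈ s, v i‖ ^ 2 ≤ (∑ i ∈ s, ‖v i‖) ^ 2 := by gcongr; exact norm_sum_le s v
    _ ≤ #s * ∑ i ∈ s, ‖v i‖ ^ 2 := sq_sum_le_card_mul_sum_sq

section InnerProductSpace

variable {𝕜 E ι κ : Type*} [RCLike 𝕜] [SeminormedAddCommGroup E] [InnerProductSpace 𝕜 E]
  {v : ι → E}

theorem norm_sum_sq_eq_sum_norm_sq_of_pairwise_inner_eq_zero {s : Finset ι}
    (hv : (s : Set ι).Pairwise fun i j ↦ ⟪v i, v j⟫_𝕜 = 0) :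
    ‖∑ i ∈ s, v i‖ ^ 2 = ∑ i ∈ s, ‖v i‖ ^ 2 := by
  have inner_sum_eq {i : ι} (hi : i ∈ s) : ⟪v i, ∑ j ∈ s, v j⟫_𝕜 = ⟪v i, v i⟫_𝕜 := by
    rw [inner_sum]
    exact sum_eq_single_of_mem i hi fun j hj hji ↦ hv hi hj hji.symm
  simp_rw [← inner_self_eq_norm_sq (𝕜 := 𝕜), ← map_sum]
  rw [sum_inner, sum_congr rfl fun i hi ↦ inner_sum_eq hi]

theorem norm_sum_sq_le_card_mul_sum_norm_sq_of_inner_eq_zero_on_fibers [Fintype κ]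
    (s : Finset ι) (c : ι → κ)
    (hv : (s : Set ι).Pairwise fun i j ↦ c i = c j → ⟪v i, v j⟫_𝕜 = 0) :
    ‖∑ i ∈ s, v i‖ ^ 2 ≤ Fintype.card κ * ∑ i ∈ s, ‖v i‖ ^ 2 := by
  have := Classical.decEq κ
  have pythagoras (a : κ) : ‖∑ i ∈ s with c i = a, v i‖ ^ 2 = ∑ i ∈ s with c i = a, ‖v i‖ ^ 2 := by
    refine norm_sum_sq_eq_sum_norm_sq_of_pairwise_inner_eq_zero (𝕜 := 𝕜) fun i hi j hj hij ↦ ?_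
    obtain ⟨his, hia⟩ := mem_filter.mp hi
    obtain ⟨hjs, hja⟩ := mem_filter.mp hj
    exact hv his hjs hij (hia.trans hja.symm)
  calc
    ‖∑ i ∈ s, v i‖ ^ 2 = ‖∑ a, ∑ i ∈ s with c i = a, v i‖ ^ 2 := by rw [sum_fiberwise]
    _ ≤ Fintype.card κ * ∑ a, ‖∑ i ∈ s with c i = a, v i‖ ^ 2 :=
      norm_sum_sq_le_card_mul_sum_norm_sq univ _
    _ = Fintype.card κ * ∑ i ∈ s, ‖v i‖ ^ 2 := by simp_rw [pythagoras, sum_fiberwise]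

end InnerProductSpace

section Gram

open Matrix

variable {𝕜 V : Type*} [RCLike 𝕜] [Fintype V]

open scoped MatrixOrder in
theorem exists_eq_gram_of_posSemidef {B : Matrix V V 𝕜} (hB : B.PosSemidef) :
    ∃ v : V → EuclideanSpace 𝕜 V, B = gram 𝕜 v := by
  classical
  obtain ⟨A, rfl⟩ := CStarAlgebra.nonneg_iff_eq_star_mul_self.mp hB.nonneg
  refine ⟨fun i ↦ WithLp.toLp 2 (A.col i), ?_⟩
  ext i j
  simp [mul_apply, PiLp.inner_apply, star_eq_conjTranspose, mul_comm]

variable {E : Type*} [SeminormedAddCommGroup E] [InnerProductSpace 𝕜 E]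

theorem sum_sum_gram (v : V → E) : ∑ i, ∑ j, gram 𝕜 v i j = (‖∑ i, v i‖ ^ 2 : ℝ) := by
  simp_rw [gram_apply, ← inner_sum, ← sum_inner]
  rw [inner_self_eq_norm_sq_to_K, RCLike.ofReal_pow]

theorem trace_gram (v : V → E) : (gram 𝕜 v).trace = (∑ i, ‖v i‖ ^ 2 : ℝ) := by
  simp [trace]

end Gram

theorem theta_le_chromatic_of_complement_general {𝕜 V κ : Type*} [RCLike 𝕜] [Fintype V] [Fintype κ]
    {Γ : SimpleGraph V} (C : Γᶜ.Coloring κ) {B : Matrix V V 𝕜} (hB : B.PosSemidef)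
    (hE : ∀ i j, Γ.Adj i j → B i j = 0) :
    ∑ i, ∑ j, B i j ≤ Fintype.card κ * B.trace := by
  obtain ⟨v, rfl⟩ := exists_eq_gram_of_posSemidef hB
  have orthogonal_of_color_eq (i j : V) (hij : i ≠ j) (hc : C i = C j) : ⟪v i, v j⟫_𝕜 = 0 := by
    refine hE i j (by_contra fun hadj ↦ C.valid ?_ hc)
    exact (SimpleGraph.compl_adj Γ i j).mpr ⟨hij, hadj⟩
  rw [sum_sum_gram, trace_gram]
  exact_mod_cast norm_sum_sq_le_card_mul_sum_norm_sq_of_inner_eq_zero_on_fibers (𝕜 := 𝕜) univ C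
    fun i _ j _ ↦ orthogonal_of_color_eq i j

/-- the Lovász theta number of a graph is at most the chromatic number of
the complement graph: any proper coloring of the complement with `k` colors bounds the
value of any feasible solution of the theta SDP by `k`. -/
theorem theta_le_chromatic_of_complement {V : Type*} [Fintype V] (Γ : SimpleGraph V)
    (k : ℕ) (c : V → Fin k)
    (hc : ∀ i j : V, i ≠ j → ¬ Γ.Adj i j → c i ≠ c j)
    (B : Matrix V V ℝ) (hB : B.PosSemidef)
    (htr : ∑ i, B i i = 1)
    (hE : ∀ i j, Γ.Adj i j → B i j = 0) :
    (∑ i, ∑ j, B i j) ≤ k := by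
  let C : Γᶜ.Coloring (Fin k) := .mk c fun {i j} hij ↦ hc i j hij.1 hij.2
  simpa [Matrix.trace, htr] using theta_le_chromatic_of_complement_general C hB hE
end

section
/- Let q ≥ 3 be an odd integer and let C_q be the cycle graph with vertex set ℤ/qℤ and edges {i, i+1} (mod q). Then the Lovász theta number of C_q equals q·cos(π/q)/(1 + cos(π/q)); that is: (i) every real symmetric positive semidefinite matrix B indexed by (ℤ/qℤ)² with Σ_i B_{i,i} = 1 and B_{i,j} = 0 whenever j = i+1 or j = i−1 (mod q) satisfies Σ_{(i,j)} B_{i,j} ≤ q·cos(π/q)/(1 + cos(π/q)); and (ii) there exists such a matrix B attaining equality. -/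
/-!
The upper bound is the Hoffman–Lovász ratio bound. Let `A` be the adjacency matrix of a
`d`-regular graph on `n` vertices and suppose that `A + τI` is positive semidefinite. Removing the
eigenvalue `d + τ` of the all-ones vector leaves the positive semidefinite matrix
`A + τI - ((d + τ)/n) J`. Since `⟨B, A⟩ = 0` and `⟨B, I⟩ = 1` for feasible `B`, pairing it with
`B` gives `τ - ((d + τ)/n) ⟨B, J⟩ ≥ 0`.

The cycle `C_q` is a Cayley graph of `ℤ/qℤ`, so `A` is diagonalised by the characters `ψ`, with
eigenvalues `2 Re ψ(1)`. As `ψ(1)` is a `q`-th root of unity and `q` is odd, `Re ψ(1)` is at least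
`-c`, where `c = cos (π/q)`; take `τ = 2c`. Equality is attained by the multiple of trace one of
`c J + (Re ψ(i - j))`, where `ψ` is a character with `Re ψ(1) = -c`.
-/

open Matrix Real

section PosSemidef

variable {n : Type*} [Fintype n] {A B M : Matrix n n ℝ}

theorem sum_mul_nonneg_of_posSemidef (hA : A.PosSemidef) (hB : B.PosSemidef) :
    0 ≤ ∑ i, ∑ j, A i j * B i j := by
  simpa [dotProduct, mulVec] using (hA.hadamard hB).dotProduct_mulVec_nonneg 1

theorem posSemidef_sub_smul_vecMulVec_of_mulVec_eq_smul (hM : M.PosSemidef) {μ : ℝ} {u : n → ℝ}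
    (hu : M *ᵥ u = μ • u) : (M - (μ / (u ⬝ᵥ u)) • vecMulVec u u).PosSemidef := by
  classical
  have hu' : u ᵥ* M = μ • u := by
    rw [← mulVec_transpose, ← conjTranspose_eq_transpose_of_trivial, hM.isHermitian, hu]
  set P : Matrix n n ℝ := 1 - (u ⬝ᵥ u)⁻¹ • vecMulVec u u
  set D : Matrix n n ℝ := M - (μ / (u ⬝ᵥ u)) • vecMulVec u u
  have hP : Pᴴ = P := by simp [P]
  have hPu : P *ᵥ u = 0 := by
    rcases eq_or_ne u 0 with rfl | hu₀
    · exact mulVec_zero P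
    · simp [P, sub_mulVec, smul_mulVec, vecMulVec_mulVec, smul_smul, dotProduct_self_eq_zero, hu₀]
  have hPM : P * M = D := by
    simp [P, D, sub_mul, vecMulVec_mul, hu', vecMulVec_smul, smul_smul, div_eq_inv_mul]
  have hMP : M * P = D := by
    simp [P, D, mul_sub, mul_vecMulVec, hu, smul_vecMulVec, smul_smul, div_eq_inv_mul]
  have hPMP : Pᴴ * M * P = D := calc
    Pᴴ * M * P = P * D := by rw [hP, Matrix.mul_assoc, hMP]
    _ = P * M - (μ / (u ⬝ᵥ u)) • vecMulVec (P *ᵥ u) u := by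
      rw [mul_sub, mul_smul_comm, mul_vecMulVec]
    _ = D := by rw [hPM, hPu, zero_vecMulVec, smul_zero, sub_zero]
  exact hPMP ▸ hM.conjTranspose_mul_mul_same P

end PosSemidef

section Theta

variable {V : Type*} [Fintype V] {G : SimpleGraph V} {B W : Matrix V V ℝ}

/-- Feasibility for the semidefinite program whose optimal value is the Lovász theta number of
`G`; the objective is the sum of the entries of `B`. -/
structure IsThetaFeasible (G : SimpleGraph V) (B : Matrix V V ℝ) : Prop where
  posSemidef : B.PosSemidef
  trace_eq_one : B.trace = 1
  apply_eq_zero_of_adj : ∀ ⦃i j⦄, G.Adj i j → B i j = 0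

theorem IsThetaFeasible.sum_mul_adjMatrix_eq_zero [DecidableRel G.Adj] (hB : IsThetaFeasible G B) :
    ∑ i, ∑ j, B i j * G.adjMatrix ℝ i j = 0 :=
  Finset.sum_eq_zero fun i _ ↦ Finset.sum_eq_zero fun j _ ↦ by
    by_cases h : G.Adj i j
    · rw [hB.apply_eq_zero_of_adj h, zero_mul]
    · rw [SimpleGraph.adjMatrix_apply, if_neg h, mul_zero]

theorem IsThetaFeasible.card_pos (hB : IsThetaFeasible G B) : 0 < Fintype.card V := by
  refine Fintype.card_pos_iff.2 (not_isEmpty_iff.1 fun _ ↦ ?_)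
  simpa using hB.trace_eq_one

theorem IsThetaFeasible.sum_le_of_isRegularOfDegree [DecidableEq V] [DecidableRel G.Adj]
    (hB : IsThetaFeasible G B) {d : ℕ} (hd : G.IsRegularOfDegree d) {τ : ℝ} (hdτ : 0 < d + τ)
    (hA : (G.adjMatrix ℝ + τ • 1).PosSemidef) :
    ∑ i, ∑ j, B i j ≤ Fintype.card V * τ / (d + τ) := by
  have hones : (G.adjMatrix ℝ + τ • 1) *ᵥ 1 = (d + τ) • 1 := by
    ext i
    have hi := SimpleGraph.adjMatrix_mulVec_const_apply_of_regular (α := ℝ) (a := 1) (v := i) hd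
    simpa [add_mulVec, smul_mulVec] using hi
  have hpair := sum_mul_nonneg_of_posSemidef hB.posSemidef
    (posSemidef_sub_smul_vecMulVec_of_mulVec_eq_smul hA hones)
  have htrace : ∑ i, ∑ j, B i j * (1 : Matrix V V ℝ) i j = 1 := by
    simpa [one_apply, trace] using hB.trace_eq_one
  have hexpand : ∑ i, ∑ j, B i j * (G.adjMatrix ℝ + τ • 1 -
      ((d + τ) / ((1 : V → ℝ) ⬝ᵥ 1)) • vecMulVec 1 1 : Matrix V V ℝ) i j =
      τ - (d + τ) / Fintype.card V * ∑ i, ∑ j, B i j := by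
    simp only [Matrix.sub_apply, Matrix.add_apply, Matrix.smul_apply, vecMulVec_apply,
      Pi.one_apply, smul_eq_mul, mul_one, one_dotProduct_one, mul_sub, mul_add,
      mul_left_comm _ τ, mul_comm _ (_ / _), Finset.sum_sub_distrib, Finset.sum_add_distrib,
      ← Finset.mul_sum, hB.sum_mul_adjMatrix_eq_zero, htrace, zero_add]
  have hcard : (0 : ℝ) < Fintype.card V := mod_cast hB.card_pos
  rw [hexpand, sub_nonneg, div_mul_eq_mul_div, div_le_iff₀ hcard] at hpair
  rw [le_div_iff₀ hdτ]
  linarith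

theorem exists_isThetaFeasible_of_posSemidef [Nonempty V] {c : ℝ} (hc : 0 ≤ c) (hW : W.PosSemidef)
    (hdiag : ∀ i, W i i = 1) (hadj : ∀ ⦃i j⦄, G.Adj i j → W i j = -c)
    (hsum : ∑ i, ∑ j, W i j = 0) :
    ∃ B, IsThetaFeasible G B ∧ ∑ i, ∑ j, B i j = Fintype.card V * c / (1 + c) := by
  have hJ : (vecMulVec 1 1 : Matrix V V ℝ).PosSemidef := by
    simpa using posSemidef_vecMulVec_self_star (1 : V → ℝ)
  set B : Matrix V V ℝ := (Fintype.card V * (1 + c))⁻¹ • (c • vecMulVec 1 1 + W)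
  have hB (i j : V) : B i j = (Fintype.card V * (1 + c))⁻¹ * (c + W i j) := by
    simp only [B, Matrix.smul_apply, Matrix.add_apply, vecMulVec_apply, Pi.one_apply, smul_eq_mul,
      mul_one]
  refine ⟨B, ⟨((hJ.smul hc).add hW).smul (by positivity), ?_, fun i j hij ↦ ?_⟩, ?_⟩
  · simp only [trace, diag_apply, hB, hdiag, Finset.sum_const, Finset.card_univ, nsmul_eq_mul]
    field_simp
    ring
  · rw [hB, hadj hij, add_neg_cancel, mul_zero]
  · simp only [hB, ← Finset.mul_sum, Finset.sum_add_distrib, hsum, Finset.sum_const,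
      Finset.card_univ, nsmul_eq_mul]
    field_simp
    ring

end Theta

section Characters

variable {G : Type*} [AddCommGroup G]

theorem posSemidef_circulant_re_addChar [Finite G] (ψ : AddChar G ℂ) :
    (circulant fun x ↦ (ψ x).re).PosSemidef := by
  have hψ : circulant (fun x ↦ (ψ x).re) =
      vecMulVec (fun x ↦ (ψ x).re) (star fun x ↦ (ψ x).re) +
        vecMulVec (fun x ↦ (ψ x).im) (star fun x ↦ (ψ x).im) := by
    ext x y
    simp [vecMulVec_apply, sub_eq_add_neg, ψ.map_add_eq_mul, ψ.map_neg_eq_conj]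
  rw [hψ]
  exact (posSemidef_vecMulVec_self_star _).add (posSemidef_vecMulVec_self_star _)

variable [Fintype G]

theorem sum_re_addChar_mul_re_addChar [DecidableEq G] (x y : G) :
    ∑ ψ : AddChar G ℂ, (ψ x).re * (ψ y).re =
      Fintype.card G * ((if x = y then 1 else 0) + if x = -y then 1 else 0) / 2 := by
  have hprod (ψ : AddChar G ℂ) :
      (ψ x).re * (ψ y).re = ((ψ (x - y)).re + (ψ (x + y)).re) / 2 := by
    simp only [sub_eq_add_neg, ψ.map_add_eq_mul, ψ.map_neg_eq_conj, Complex.mul_re,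
      Complex.conj_re, Complex.conj_im]
    ring
  have hsum (z : G) :
      ∑ ψ : AddChar G ℂ, (ψ z).re = Fintype.card G * if z = 0 then 1 else 0 := by
    rw [← Complex.re_sum, AddChar.sum_apply_eq_ite]
    split_ifs <;> simp
  simp only [hprod, ← Finset.sum_div, Finset.sum_add_distrib, hsum, sub_eq_zero,
    add_eq_zero_iff_eq_neg, mul_add]

theorem sum_sum_mul_re_addChar_mul_re_addChar {f : G → ℝ} (hf : ∀ x, f (-x) = f x) (y : G) :
    ∑ ψ : AddChar G ℂ, (∑ x, f x * (ψ x).re) * (ψ y).re = Fintype.card G * f y := by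
  classical
  simp only [Finset.sum_mul, mul_assoc]
  rw [Finset.sum_comm]
  simp only [← Finset.mul_sum, sum_re_addChar_mul_re_addChar]
  simp only [mul_add, add_div, Finset.sum_add_distrib, mul_div_assoc', mul_ite, mul_one, mul_zero,
    ← Finset.sum_div, Finset.sum_ite_eq', Finset.mem_univ, if_true, hf]
  ring

theorem posSemidef_circulant_of_forall_addChar {f : G → ℝ} (hf : ∀ x, f (-x) = f x)
    (hψ : ∀ ψ : AddChar G ℂ, 0 ≤ ∑ x, f x * (ψ x).re) : (circulant f).PosSemidef := by
  have hinv : circulant f = ∑ ψ : AddChar G ℂ,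
      ((Fintype.card G : ℝ)⁻¹ * ∑ x, f x * (ψ x).re) • circulant fun x ↦ (ψ x).re := by
    ext x y
    simp only [Matrix.sum_apply, Matrix.smul_apply, circulant_apply, smul_eq_mul, mul_assoc,
      ← Finset.mul_sum, sum_sum_mul_re_addChar_mul_re_addChar hf]
    simp
  rw [hinv]
  exact posSemidef_sum _ fun ψ _ ↦
    (posSemidef_circulant_re_addChar ψ).smul (mul_nonneg (by positivity) (hψ ψ))

end Characters

section CirculantGraph

open SimpleGraph

variable {G : Type*} [AddCommGroup G] {S : Finset G}

theorem circulantGraph_adj_iff_sub_mem (hS : ∀ s ∈ S, -s ∈ S) (hS₀ : 0 ∉ S) {x y : G} :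
    (circulantGraph (S : Set G)).Adj x y ↔ x - y ∈ S := by
  have hsymm : y - x ∈ S → x - y ∈ S := fun h ↦ neg_sub y x ▸ hS _ h
  have hne : x - y ∈ S → x ≠ y := by rintro h rfl; exact hS₀ (sub_self x ▸ h)
  simp only [circulantGraph_adj, Finset.mem_coe]
  tauto

theorem isRegularOfDegree_circulantGraph [Fintype G] [DecidableEq G] (hS : ∀ s ∈ S, -s ∈ S)
    (hS₀ : 0 ∉ S) : (circulantGraph (S : Set G)).IsRegularOfDegree S.card := by
  intro x
  rw [← card_neighborFinset_eq_degree]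
  refine Finset.card_nbij' (x - ·) (x - ·) ?_ ?_ ?_ ?_ <;>
    simp [-circulantGraph_adj, Set.MapsTo, Set.LeftInvOn, circulantGraph_adj_iff_sub_mem hS hS₀]

theorem posSemidef_adjMatrix_circulantGraph_add_smul_one [Finite G] [DecidableEq G]
    (hS : ∀ s ∈ S, -s ∈ S) (hS₀ : 0 ∉ S) {τ : ℝ}
    (hτ : ∀ ψ : AddChar G ℂ, -τ ≤ ∑ s ∈ S, (ψ s).re) :
    ((circulantGraph (S : Set G)).adjMatrix ℝ + τ • 1).PosSemidef := by
  have hcirc : (circulantGraph (S : Set G)).adjMatrix ℝ + τ • 1 =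
      circulant fun x ↦ (if x ∈ S then 1 else 0) + τ * if x = 0 then 1 else 0 := by
    ext x y
    simp [-circulantGraph_adj, one_apply, circulantGraph_adj_iff_sub_mem hS hS₀, sub_eq_zero]
  have := Fintype.ofFinite G
  rw [hcirc]
  refine posSemidef_circulant_of_forall_addChar (fun x ↦ ?_) fun ψ ↦ ?_
  · have hmem : -x ∈ S ↔ x ∈ S := ⟨fun h ↦ neg_neg x ▸ hS _ h, hS x⟩
    simp only [hmem, neg_eq_zero]
  · have hsum : ∑ x, ((if x ∈ S then 1 else 0) + τ * if x = 0 then 1 else 0) * (ψ x).re =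
        ∑ s ∈ S, (ψ s).re + τ := by
      simp [add_mul, Finset.sum_add_distrib]
    linarith [hτ ψ]

variable [Fintype G]

theorem IsThetaFeasible.sum_le_of_circulantGraph {B : Matrix G G ℝ}
    (hB : IsThetaFeasible (circulantGraph (S : Set G)) B) (hS : ∀ s ∈ S, -s ∈ S) (hS₀ : 0 ∉ S)
    {τ : ℝ} (hSτ : 0 < S.card + τ) (hτ : ∀ ψ : AddChar G ℂ, -τ ≤ ∑ s ∈ S, (ψ s).re) :
    ∑ i, ∑ j, B i j ≤ Fintype.card G * τ / (S.card + τ) := by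
  classical
  exact hB.sum_le_of_isRegularOfDegree (isRegularOfDegree_circulantGraph hS hS₀) hSτ
    (posSemidef_adjMatrix_circulantGraph_add_smul_one hS hS₀ hτ)

theorem exists_isThetaFeasible_circulantGraph {ψ : AddChar G ℂ} (hψ : ψ ≠ 0) {c : ℝ} (hc : 0 ≤ c)
    (hψS : ∀ s ∈ S, (ψ s).re = -c) :
    ∃ B, IsThetaFeasible (circulantGraph (S : Set G)) B ∧
      ∑ i, ∑ j, B i j = Fintype.card G * c / (1 + c) := by
  refine exists_isThetaFeasible_of_posSemidef hc (posSemidef_circulant_re_addChar ψ) (by simp)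
    ?_ (Finset.sum_eq_zero fun x _ ↦ ?_)
  · rintro x y ⟨-, h | h⟩
    · exact hψS _ h
    · rw [circulant_apply, ← neg_sub, ψ.map_neg_eq_conj, Complex.conj_re]
      exact hψS _ h
  · have hshift : ∑ y, (ψ (x - y)).re = ∑ y, (ψ y).re :=
      (Equiv.subLeft x).sum_comp fun y ↦ (ψ y).re
    simp only [circulant_apply]
    rw [hshift, ← Complex.re_sum, AddChar.sum_eq_zero_iff_ne_zero.2 hψ, Complex.zero_re]

end CirculantGraph

section RootsOfUnity

variable {q : ℕ}

theorem cos_pi_div_nonneg (hq : 2 ≤ q) : 0 ≤ cos (π / q) := by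
  have hq' : (2 : ℝ) ≤ q := mod_cast hq
  apply cos_nonneg_of_neg_pi_div_two_le_of_le
  · linarith [pi_pos, show 0 ≤ π / q by positivity]
  · gcongr

theorem cos_pi_mul_div_le_cos_pi_div {m : ℤ} (hm : m ≠ 0) (hmq : |m| ≤ q) :
    cos (π * m / q) ≤ cos (π / q) := by
  have hone : (1 : ℝ) ≤ |(m : ℝ)| := mod_cast Int.one_le_abs hm
  have hle : |(m : ℝ)| ≤ q := mod_cast hmq
  have hq : (0 : ℝ) < q := by linarith
  rw [← cos_abs, abs_div, abs_mul, abs_of_pos pi_pos, abs_of_pos hq]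
  apply cos_le_cos_of_nonneg_of_le_pi (by positivity)
  · rw [div_le_iff₀ hq]
    gcongr
  · gcongr
    exact le_mul_of_one_le_right pi_pos.le hone

theorem neg_cos_pi_div_le_re_of_pow_eq_one (hq : Odd q) {z : ℂ} (hz : z ^ q = 1) :
    -cos (π / q) ≤ z.re := by
  have : NeZero q := ⟨hq.pos.ne'⟩
  obtain ⟨k, hk, rfl⟩ := (Complex.isPrimitiveRoot_exp q hq.pos.ne').eq_pow_of_pow_eq_one hz
  have hre : (Complex.exp (2 * π * Complex.I / q) ^ k).re = cos (2 * π * k / q) := by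
    rw [← Complex.exp_nat_mul, ← Complex.exp_ofReal_mul_I_re]
    push_cast
    ring_nf
  have hshift : cos (2 * π * k / q) = -cos (π * (2 * k - q : ℤ) / q) := by
    have hangle : π * (2 * k - q : ℤ) / q = 2 * π * k / q - π := by
      have : (q : ℝ) ≠ 0 := NeZero.ne _
      push_cast
      field_simp
    rw [hangle, cos_sub_pi, neg_neg]
  rw [hre, hshift, neg_le_neg_iff]
  apply cos_pi_mul_div_le_cos_pi_div <;> grind

theorem exists_addChar_zmod_re_eq_neg_cos (hq : Odd q) :
    ∃ ψ : AddChar (ZMod q) ℂ, (ψ 1).re = -cos (π / q) := by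
  have : NeZero q := ⟨hq.pos.ne'⟩
  obtain ⟨k, hk⟩ := id hq
  refine ⟨AddChar.mulShift ZMod.stdAddChar (k : ZMod q), ?_⟩
  have hexp := ZMod.stdAddChar_coe (N := q) k
  rw [Int.cast_natCast] at hexp
  have hangle : 2 * π * Complex.I * (k : ℤ) / q = (π - π / q : ℝ) * Complex.I := by
    have hq₀ : (q : ℂ) ≠ 0 := NeZero.ne _
    have hk' : (q : ℂ) = 2 * k + 1 := mod_cast hk
    push_cast
    field_simp
    linear_combination -hk'
  rw [AddChar.mulShift_apply, mul_one, hexp, hangle, Complex.exp_ofReal_mul_I_re, cos_pi_sub]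

end RootsOfUnity

section OddCycle

open SimpleGraph

variable {q : ℕ}

/-- The cycle graph on `ZMod q`. Listing both jumps makes the set of jumps symmetric, so that its
cardinality is the degree. -/
abbrev zmodCycleGraph (q : ℕ) : SimpleGraph (ZMod q) :=
  circulantGraph (({1, -1} : Finset (ZMod q)) : Set (ZMod q))

theorem isThetaFeasible_zmodCycleGraph_iff [NeZero q] [Nontrivial (ZMod q)]
    {B : Matrix (ZMod q) (ZMod q) ℝ} :
    IsThetaFeasible (zmodCycleGraph q) B ↔ B.PosSemidef ∧ ∑ i, B i i = 1 ∧
      ∀ i j : ZMod q, (j = i + 1 ∨ j = i - 1) → B i j = 0 := by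
  have hadj (i j : ZMod q) : (zmodCycleGraph q).Adj i j ↔ j = i + 1 ∨ j = i - 1 := by
    rw [circulantGraph_adj_iff_sub_mem (by simp) (by simp)]
    simp only [Finset.mem_insert, Finset.mem_singleton]
    grind
  simp only [← hadj]
  exact ⟨fun h ↦ ⟨h.posSemidef, h.trace_eq_one, h.apply_eq_zero_of_adj⟩,
    fun ⟨hpos, htrace, hzero⟩ ↦ ⟨hpos, htrace, hzero⟩⟩

theorem IsThetaFeasible.sum_le_of_zmodCycleGraph [NeZero q] {B : Matrix (ZMod q) (ZMod q) ℝ}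
    (hB : IsThetaFeasible (zmodCycleGraph q) B) (hq : Odd q) (hq₃ : 3 ≤ q) :
    ∑ i, ∑ j, B i j ≤ q * cos (π / q) / (1 + cos (π / q)) := by
  have : Fact (2 < q) := ⟨hq₃⟩
  have : Fact (1 < q) := ⟨by lia⟩
  have hc := cos_pi_div_nonneg (by lia : 2 ≤ q)
  have hne : (1 : ZMod q) ≠ -1 := (ZMod.neg_one_ne_one (n := q)).symm
  have hchar (ψ : AddChar (ZMod q) ℂ) :
      -(2 * cos (π / q)) ≤ ∑ s ∈ ({1, -1} : Finset (ZMod q)), (ψ s).re := by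
    have hroot : ψ 1 ^ q = 1 := by simp [← ψ.map_nsmul_eq_pow]
    rw [Finset.sum_pair hne, ψ.map_neg_eq_conj, Complex.conj_re]
    linarith [neg_cos_pi_div_le_re_of_pow_eq_one hq hroot]
  have hbound := hB.sum_le_of_circulantGraph (by simp) (by simp)
    (by rw [Finset.card_pair hne]; push_cast; linarith) hchar
  rw [Finset.card_pair hne, ZMod.card] at hbound
  convert hbound using 1
  push_cast
  field_simp

theorem exists_isThetaFeasible_zmodCycleGraph [NeZero q] (hq : Odd q) (hq₃ : 3 ≤ q) :
    ∃ B, IsThetaFeasible (zmodCycleGraph q) B ∧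
      ∑ i, ∑ j, B i j = q * cos (π / q) / (1 + cos (π / q)) := by
  have hc := cos_pi_div_nonneg (by lia : 2 ≤ q)
  obtain ⟨ψ, hψ⟩ := exists_addChar_zmod_re_eq_neg_cos hq
  have hψ₀ : ψ ≠ 0 := by
    rintro rfl
    rw [AddChar.zero_apply, Complex.one_re] at hψ
    linarith
  have hψS : ∀ s ∈ ({1, -1} : Finset (ZMod q)), (ψ s).re = -cos (π / q) := by
    simp [ψ.map_neg_eq_conj, hψ]
  simpa only [ZMod.card] using exists_isThetaFeasible_circulantGraph hψ₀ hc hψS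

end OddCycle

/-- the Lovász theta number of the odd cycle `C_q` equals
`q cos(π/q) / (1 + cos(π/q))`: every feasible solution of the theta SDP is bounded by this
value, and some feasible solution attains it. -/
theorem theta_odd_cycle (q : ℕ) [NeZero q] (hq : Odd q) (h3 : 3 ≤ q) :
    (∀ B : Matrix (ZMod q) (ZMod q) ℝ, B.PosSemidef →
      (∑ i, B i i) = 1 →
      (∀ i j : ZMod q, (j = i + 1 ∨ j = i - 1) → B i j = 0) →
      (∑ i, ∑ j, B i j) ≤ q * Real.cos (Real.pi / q) / (1 + Real.cos (Real.pi / q)))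
    ∧ ∃ B : Matrix (ZMod q) (ZMod q) ℝ, B.PosSemidef ∧
        (∑ i, B i i) = 1 ∧
        (∀ i j : ZMod q, (j = i + 1 ∨ j = i - 1) → B i j = 0) ∧
        (∑ i, ∑ j, B i j) = q * Real.cos (Real.pi / q) / (1 + Real.cos (Real.pi / q)) := by
  have : Fact (1 < q) := ⟨by lia⟩
  refine ⟨fun B hpos htrace hzero ↦ ?_, ?_⟩
  · have hB := isThetaFeasible_zmodCycleGraph_iff.2 ⟨hpos, htrace, hzero⟩
    exact hB.sum_le_of_zmodCycleGraph hq h3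
  · obtain ⟨B, hB, hsum⟩ := exists_isThetaFeasible_zmodCycleGraph hq h3
    obtain ⟨hpos, htrace, hzero⟩ := isThetaFeasible_zmodCycleGraph_iff.1 hB
    exact ⟨B, hpos, htrace, hzero, hsum⟩
end
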